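/- Assume F is algebraically closed and q is not a root of unity, and let d ≥ 0 be an even integer. If V is a (d+1)-dimensional irreducible representation of H_q, then there exist nonzero elements k0,k1,k2,k3 of F with k0 k1 k2 k3 = q^{-d-1} such that the representation O(k0,k1,k2,k3) is isomorphic to V. -/

import Mathlib

/-!
Let `d = 2p`. By Schur's lemma each `Tᵢ + Tᵢ⁻¹` is a scalar `kᵢ + kᵢ⁻¹`, and since `V` has odd
dimension `2p + 1` the parameter `kᵢ` can be chosen so that `ker (Tᵢ - kᵢ)` has dimension at least
`p + 1` (`exists_param`). Hence `T₀` and `T₃` have a common eigenvector `v` with eigenvalues `k₀`,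
`k₃`. Solving the relations of the Verma-type module `M(k₀,k₁,k₂,k₃)` step by step from `v` gives a
sequence `m₀ = v, m₁, m₂, …` in `V` that satisfies all of those relations (`Quad.rel_chain`), and
irreducibility makes `m₀, …, m_d` a basis (`Rel.notMem_flag`).

It remains to see that `m_{d+1} = 0` and `k₀ k₁ k₂ k₃ = q ^ (-d-1)`. Since `ker (T₁ - k₁)` and
`ker (T₂ - k₂)` are large, `T₁` and `T₂` act as `k₁` and `k₂` on the quotient of `V` by the span of
`m₀, …, m_{d-1}` (`top_eigen_of_big_ker`). This gives the product formula and puts `m_{d+1}` in that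
span (`Quad.prod_param`). Suppose `m_{d+1} ≠ 0`. It is a common eigenvector of `T₂` and `T₁` with
eigenvalues `k₂⁻¹` and `k₁⁻¹`, so the product formula for the representation with indices rotated
by two reads `k₂⁻¹ k₃ k₀ k₁⁻¹ = q ^ (-d-1)`; with the first product formula this yields
`(k₀ k₃)² = q ^ (-2d-2)`. But `m_{d+1}` is also an eigenvector of `T₃ T₀`, which is triangular on
the `mⱼ`, and as `q` is not a root of unity its eigenvalue differs from the diagonal entries at
`m₀, …, m_{d-1}`, a contradiction (`Quad.chain_end`).
-/

universe u

namespace DAHA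

variable {F : Type*} [Field F]

/-- A representation of the universal DAHA `H_q` of type `(C₁∨, C₁)` on `V`:
a quadruple of invertible operators (indexed by `ZMod 4`) such that each
`Tᵢ + Tᵢ⁻¹` commutes with every `Tⱼ` and `T₀ T₁ T₂ T₃ = q⁻¹ • id`. -/
def IsRep {V : Type*} [AddCommGroup V] [Module F V] (q : F)
    (T : ZMod 4 → Module.End F V) : Prop :=
  (∀ i, IsUnit (T i)) ∧
  (∀ i j, Commute (T i + Ring.inverse (T i)) (T j)) ∧
  (T 0 * T 1 * T 2 * T 3 = q⁻¹ • (1 : Module.End F V))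

/-- Irreducibility: `V ≠ 0` and the only invariant subspaces are `⊥` and `⊤`. -/
def Irred {V : Type*} [AddCommGroup V] [Module F V]
    (T : ZMod 4 → Module.End F V) : Prop :=
  (∃ v : V, v ≠ 0) ∧
  ∀ W : Submodule F V, (∀ i, ∀ w ∈ W, T i w ∈ W) → W = ⊥ ∨ W = ⊤

/-- Isomorphism of two operator quadruples. -/
def Iso {V : Type*} {V' : Type*} [AddCommGroup V] [Module F V]
    [AddCommGroup V'] [Module F V']
    (T : ZMod 4 → Module.End F V) (T' : ZMod 4 → Module.End F V') : Prop :=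
  ∃ S : V ≃ₗ[F] V', ∀ i v, S (T i v) = T' i (S v)

/-- The twist of an operator quadruple by `ε ∈ ℤ/4ℤ`. -/
def twist {V : Type*} [AddCommGroup V] [Module F V]
    (T : ZMod 4 → Module.End F V) (ε : ZMod 4) : ZMod 4 → Module.End F V :=
  fun i => T (i + ε)

/-- The standard basis vectors `v_i` of `Fin (d+1) → F`, extended by `0` beyond index `d`. -/
noncomputable def e (F : Type*) [Field F] (d i : ℕ) : Fin (d + 1) → F :=
  if h : i < d + 1 then Pi.single (⟨i, h⟩ : Fin (d + 1)) (1 : F) else 0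

/-- The basis vectors `m_i` of `ℕ →₀ F`. -/
noncomputable def mv (F : Type*) [Field F] (i : ℕ) : ℕ →₀ F := Finsupp.single i 1

/-- The defining action of the even-dimensional module `E(k₀,k₁,k₂,k₃)` (for `d` odd)
on the basis `v_0, …, v_d` of `Fin (d+1) → F`. -/
def IsE (q k0 k1 k2 k3 : F) (d : ℕ)
    (T : ZMod 4 → Module.End F (Fin (d + 1) → F)) : Prop :=
  (∀ i : ℕ, Even i → 2 ≤ i → i ≤ d - 1 →
    T 0 (e F d i) = (k0⁻¹ * (q ^ i)⁻¹ * (1 - q ^ i) * (1 - k0 ^ 2 * q ^ i)) • e F d (i - 1)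
      + (k0 + k0⁻¹ - k0⁻¹ * (q ^ i)⁻¹) • e F d i) ∧
  (∀ i : ℕ, Odd i → i ≤ d - 2 →
    T 0 (e F d i) = (k0⁻¹ * (q ^ (i + 1))⁻¹) • (e F d i - e F d (i + 1))) ∧
  (T 0 (e F d 0) = k0 • e F d 0) ∧
  (T 0 (e F d d) = k0 • e F d d) ∧
  (∀ i : ℕ, Even i → 2 ≤ i → i ≤ d - 1 →
    T 1 (e F d i) = (-(k1 * (1 - q ^ i) * (1 - k0 ^ 2 * q ^ i))) • e F d (i - 1)
      + k1 • e F d i + k1⁻¹ • e F d (i + 1)) ∧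
  (∀ i : ℕ, Odd i → i ≤ d → T 1 (e F d i) = k1⁻¹ • e F d i) ∧
  (T 1 (e F d 0) = k1 • e F d 0 + k1⁻¹ • e F d 1) ∧
  (∀ i : ℕ, Even i → i ≤ d - 1 →
    T 2 (e F d i) = (k0⁻¹ * k1⁻¹ * k3⁻¹ * (q ^ (i + 1))⁻¹) • (e F d i - e F d (i + 1))) ∧
  (∀ i : ℕ, Odd i → i ≤ d →
    T 2 (e F d i) = ((k0 * k1 * k3 * q ^ i)⁻¹ * (k0 * k1 * k3 * q ^ i - k2)
        * (k0 * k1 * k3 * q ^ i - k2⁻¹)) • e F d (i - 1)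
      + (k2 + k2⁻¹ - k0⁻¹ * k1⁻¹ * k3⁻¹ * (q ^ i)⁻¹) • e F d i) ∧
  (∀ i : ℕ, Even i → i ≤ d - 1 → T 3 (e F d i) = k3 • e F d i) ∧
  (∀ i : ℕ, Odd i → i ≤ d - 2 →
    T 3 (e F d i) = (-(k3⁻¹ * (k0 * k1 * k3 * q ^ i - k2)
        * (k0 * k1 * k3 * q ^ i - k2⁻¹))) • e F d (i - 1)
      + k3⁻¹ • e F d i + k3 • e F d (i + 1)) ∧
  (T 3 (e F d d) = (-(k3⁻¹ * (k0 * k1 * k3 * q ^ d - k2)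
        * (k0 * k1 * k3 * q ^ d - k2⁻¹))) • e F d (d - 1)
      + k3⁻¹ • e F d d)

/-- The defining action of the odd-dimensional module `O(k₀,k₁,k₂,k₃)` (for `d` even)
on the basis `v_0, …, v_d` of `Fin (d+1) → F`. -/
def IsO (q k0 k1 k2 k3 : F) (d : ℕ)
    (T : ZMod 4 → Module.End F (Fin (d + 1) → F)) : Prop :=
  (∀ i : ℕ, Even i → 2 ≤ i → i ≤ d →
    T 0 (e F d i) = (k0⁻¹ * (q ^ i)⁻¹ * (1 - q ^ i) * (1 - k0 ^ 2 * q ^ i)) • e F d (i - 1)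
      + (k0 + k0⁻¹ - k0⁻¹ * (q ^ i)⁻¹) • e F d i) ∧
  (∀ i : ℕ, Odd i → i ≤ d - 1 →
    T 0 (e F d i) = (k0⁻¹ * (q ^ (i + 1))⁻¹) • (e F d i - e F d (i + 1))) ∧
  (T 0 (e F d 0) = k0 • e F d 0) ∧
  (∀ i : ℕ, Even i → 2 ≤ i → i ≤ d - 2 →
    T 1 (e F d i) = (-(k1 * (1 - q ^ i) * (1 - k0 ^ 2 * q ^ i))) • e F d (i - 1)
      + k1 • e F d i + k1⁻¹ • e F d (i + 1)) ∧
  (∀ i : ℕ, Odd i → i ≤ d - 1 → T 1 (e F d i) = k1⁻¹ • e F d i) ∧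
  (T 1 (e F d 0) = k1 • e F d 0 + k1⁻¹ • e F d 1) ∧
  (T 1 (e F d d) = (-(k1 * (1 - q ^ d) * (1 - k0 ^ 2 * q ^ d))) • e F d (d - 1) + k1 • e F d d) ∧
  (∀ i : ℕ, Even i → i ≤ d - 2 →
    T 2 (e F d i) = (k2 * q ^ (d - i)) • (e F d i - e F d (i + 1))) ∧
  (∀ i : ℕ, Odd i → i ≤ d - 1 →
    T 2 (e F d i) = (-(k2 * (1 - (k2 ^ 2)⁻¹ * (q ^ (d + 1 - i))⁻¹) * (1 - q ^ (d - i + 1)))) • e F d (i - 1)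
      + (k2 + k2⁻¹ - k2 * q ^ (d - i + 1)) • e F d i) ∧
  (T 2 (e F d d) = k2 • e F d d) ∧
  (∀ i : ℕ, Even i → i ≤ d → T 3 (e F d i) = k3 • e F d i) ∧
  (∀ i : ℕ, Odd i → i ≤ d - 1 →
    T 3 (e F d i) = (-(k3⁻¹ * (1 - (k2 ^ 2)⁻¹ * (q ^ (d + 1 - i))⁻¹)
        * (1 - (q ^ (d + 1 - i))⁻¹))) • e F d (i - 1)
      + k3⁻¹ • e F d i + k3 • e F d (i + 1))

/-- The defining action of the infinite-dimensional module `M(k₀,k₁,k₂,k₃)`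
on the basis `m_0, m_1, …` of `ℕ →₀ F`. -/
def IsM (q k0 k1 k2 k3 : F) (T : ZMod 4 → Module.End F (ℕ →₀ F)) : Prop :=
  (∀ i : ℕ, Even i → 2 ≤ i →
    T 0 (mv F i) = (k0⁻¹ * (q ^ i)⁻¹ * (1 - q ^ i) * (1 - k0 ^ 2 * q ^ i)) • mv F (i - 1)
      + (k0 + k0⁻¹ - k0⁻¹ * (q ^ i)⁻¹) • mv F i) ∧
  (∀ i : ℕ, Odd i →
    T 0 (mv F i) = (k0⁻¹ * (q ^ (i + 1))⁻¹) • (mv F i - mv F (i + 1))) ∧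
  (T 0 (mv F 0) = k0 • mv F 0) ∧
  (∀ i : ℕ, Even i → 2 ≤ i →
    T 1 (mv F i) = (-(k1 * (1 - q ^ i) * (1 - k0 ^ 2 * q ^ i))) • mv F (i - 1)
      + k1 • mv F i + k1⁻¹ • mv F (i + 1)) ∧
  (∀ i : ℕ, Odd i → T 1 (mv F i) = k1⁻¹ • mv F i) ∧
  (T 1 (mv F 0) = k1 • mv F 0 + k1⁻¹ • mv F 1) ∧
  (∀ i : ℕ, Even i →
    T 2 (mv F i) = (k0⁻¹ * k1⁻¹ * k3⁻¹ * (q ^ (i + 1))⁻¹) • (mv F i - mv F (i + 1))) ∧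
  (∀ i : ℕ, Odd i →
    T 2 (mv F i) = ((k0 * k1 * k3 * q ^ i)⁻¹ * (k0 * k1 * k3 * q ^ i - k2)
        * (k0 * k1 * k3 * q ^ i - k2⁻¹)) • mv F (i - 1)
      + (k2 + k2⁻¹ - k0⁻¹ * k1⁻¹ * k3⁻¹ * (q ^ i)⁻¹) • mv F i) ∧
  (∀ i : ℕ, Even i → T 3 (mv F i) = k3 • mv F i) ∧
  (∀ i : ℕ, Odd i →
    T 3 (mv F i) = (-(k3⁻¹ * (k0 * k1 * k3 * q ^ i - k2)
        * (k0 * k1 * k3 * q ^ i - k2⁻¹))) • mv F (i - 1)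
      + k3⁻¹ • mv F i + k3 • mv F (i + 1))


/-! ### The chain generated by a common eigenvector of `T₀` and `T₃` -/

section Chain

variable {V : Type*} [AddCommGroup V] [Module F V]

/-- Four operators satisfying the quadratic relations `(Tᵢ - kᵢ)(Tᵢ - kᵢ⁻¹) = 0` and
`T₀ T₁ T₂ T₃ = q⁻¹` and having no common proper nonzero invariant subspace: an irreducible (or zero)
representation on which each `Tᵢ + Tᵢ⁻¹` acts as the scalar `kᵢ + kᵢ⁻¹`. The structure depends
on each `kᵢ` only up to inversion. -/
structure Quad (q k0 k1 k2 k3 : F) (T0 T1 T2 T3 : Module.End F V) : Prop where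
  q_ne : q ≠ 0
  k0_ne : k0 ≠ 0
  k1_ne : k1 ≠ 0
  k2_ne : k2 ≠ 0
  k3_ne : k3 ≠ 0
  sq0 : ∀ x, T0 (T0 x) = (k0 + k0⁻¹) • T0 x - x
  sq1 : ∀ x, T1 (T1 x) = (k1 + k1⁻¹) • T1 x - x
  sq2 : ∀ x, T2 (T2 x) = (k2 + k2⁻¹) • T2 x - x
  sq3 : ∀ x, T3 (T3 x) = (k3 + k3⁻¹) • T3 x - x
  prod : ∀ x, T0 (T1 (T2 (T3 x))) = q⁻¹ • x
  irr : ∀ W : Submodule F V, (∀ w ∈ W, T0 w ∈ W ∧ T1 w ∈ W ∧ T2 w ∈ W ∧ T3 w ∈ W) →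
    W = ⊥ ∨ W = ⊤

/-- The relations of the Verma-type module `M(k₀,k₁,k₂,k₃)`, imposed on a sequence of vectors.
At `i = 0` the coefficient `1 - q ^ i` vanishes, so the truncated index `i - 1` is harmless. -/
structure Rel (q k0 k1 k2 k3 : F) (T0 T1 T2 T3 : Module.End F V) (m : ℕ → V) : Prop where
  r0e : ∀ i, Even i → T0 (m i) =
    (k0⁻¹ * (q ^ i)⁻¹ * (1 - q ^ i) * (1 - k0 ^ 2 * q ^ i)) • m (i - 1)
      + (k0 + k0⁻¹ - k0⁻¹ * (q ^ i)⁻¹) • m i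
  r0o : ∀ i, Odd i → T0 (m i) = (k0⁻¹ * (q ^ (i + 1))⁻¹) • (m i - m (i + 1))
  r1e : ∀ i, Even i → T1 (m i) = (-(k1 * (1 - q ^ i) * (1 - k0 ^ 2 * q ^ i))) • m (i - 1)
      + k1 • m i + k1⁻¹ • m (i + 1)
  r1o : ∀ i, Odd i → T1 (m i) = k1⁻¹ • m i
  r2e : ∀ i, Even i → T2 (m i) = (k0⁻¹ * k1⁻¹ * k3⁻¹ * (q ^ (i + 1))⁻¹) • (m i - m (i + 1))
  r2o : ∀ i, Odd i → T2 (m i) = ((k0 * k1 * k3 * q ^ i)⁻¹ * (k0 * k1 * k3 * q ^ i - k2)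
        * (k0 * k1 * k3 * q ^ i - k2⁻¹)) • m (i - 1)
      + (k2 + k2⁻¹ - k0⁻¹ * k1⁻¹ * k3⁻¹ * (q ^ i)⁻¹) • m i
  r3e : ∀ i, Even i → T3 (m i) = k3 • m i
  r3o : ∀ i, Odd i → T3 (m i) = (-(k3⁻¹ * (k0 * k1 * k3 * q ^ i - k2)
        * (k0 * k1 * k3 * q ^ i - k2⁻¹))) • m (i - 1)
      + k3⁻¹ • m i + k3 • m (i + 1)

/-- The sequence generated from `v` by solving the `T₁`-relation at even indices and the
`T₀`-relation at odd indices for the next vector. -/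
noncomputable def chain (q k0 k1 : F) (T0 T1 : Module.End F V) (v : V) : ℕ → V
  | 0 => v
  | 1 => k1 • (T1 v - k1 • v)
  | n + 2 =>
    if Even n then
      chain q k0 k1 T0 T1 v (n + 1) - (k0 * q ^ (n + 2)) • T0 (chain q k0 k1 T0 T1 v (n + 1))
    else
      k1 • (T1 (chain q k0 k1 T0 T1 v (n + 1)) - k1 • chain q k0 k1 T0 T1 v (n + 1)
        + (k1 * (1 - q ^ (n + 1)) * (1 - k0 ^ 2 * q ^ (n + 1))) • chain q k0 k1 T0 T1 v n)

lemma chain_even (q k0 k1 : F) (hk1 : k1 ≠ 0) (T0 T1 : Module.End F V) (v : V) (i : ℕ)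
    (hi : Even i) :
    T1 (chain q k0 k1 T0 T1 v i) =
      (-(k1 * (1 - q ^ i) * (1 - k0 ^ 2 * q ^ i))) • chain q k0 k1 T0 T1 v (i - 1)
      + k1 • chain q k0 k1 T0 T1 v i + k1⁻¹ • chain q k0 k1 T0 T1 v (i + 1) := by
  rcases i with _ | n
  · simp [chain, smul_smul, hk1]
  · have hn : ¬ Even n := by grind
    rw [show n + 1 + 1 = n + 2 from rfl, chain.eq_3, if_neg hn, Nat.add_sub_cancel]
    match_scalars <;> field_simp <;> ring

lemma chain_odd (q k0 k1 : F) (hq : q ≠ 0) (hk0 : k0 ≠ 0) (T0 T1 : Module.End F V) (v : V)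
    (i : ℕ) (hi : Odd i) :
    T0 (chain q k0 k1 T0 T1 v i) = (k0⁻¹ * (q ^ (i + 1))⁻¹) •
      (chain q k0 k1 T0 T1 v i - chain q k0 k1 T0 T1 v (i + 1)) := by
  rcases i with _ | n
  · simp at hi
  · have hn : Even n := by grind
    rw [show n + 1 + 1 = n + 2 from rfl, chain.eq_3, if_pos hn]
    match_scalars <;> field_simp
    ring

variable {q k0 k1 k2 k3 : F} {T0 T1 T2 T3 : Module.End F V}

namespace Quad

lemma prod1 (h : Quad q k0 k1 k2 k3 T0 T1 T2 T3) (x : V) :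
    T3 (T0 (T1 (T2 x))) = q⁻¹ • x := by
  have hx : x = T3 ((k3 + k3⁻¹) • x - T3 x) := by
    rw [map_sub, map_smul, h.sq3]; abel
  rw [hx, h.prod, map_smul]

lemma prod2 (h : Quad q k0 k1 k2 k3 T0 T1 T2 T3) (x : V) :
    T2 (T3 (T0 (T1 x))) = q⁻¹ • x := by
  have hx : x = T2 ((k2 + k2⁻¹) • x - T2 x) := by
    rw [map_sub, map_smul, h.sq2]; abel
  rw [hx, h.prod1, map_smul]

/-- Rotating the indices by two and inverting the first and last parameters. -/
lemma rotate (h : Quad q k0 k1 k2 k3 T0 T1 T2 T3) :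
    Quad q k2⁻¹ k3 k0 k1⁻¹ T2 T3 T0 T1 where
  q_ne := h.q_ne
  k0_ne := inv_ne_zero h.k2_ne
  k1_ne := h.k3_ne
  k2_ne := h.k0_ne
  k3_ne := inv_ne_zero h.k1_ne
  sq0 x := by rw [inv_inv, add_comm, h.sq2]
  sq1 := h.sq3
  sq2 := h.sq0
  sq3 x := by rw [inv_inv, add_comm, h.sq1]
  prod := h.prod2
  irr W hW := h.irr W fun w hw => by
    obtain ⟨a, b, c, d⟩ := hW w hw
    exact ⟨c, d, a, b⟩

/-- Universal property: a common eigenvector of `T₀` and `T₃` generates a sequence obeying all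
the relations of `M(k₀,k₁,k₂,k₃)`. -/
lemma rel_chain (h : Quad q k0 k1 k2 k3 T0 T1 T2 T3) {v : V}
    (h0 : T0 v = k0 • v) (h3 : T3 v = k3 • v) :
    Rel q k0 k1 k2 k3 T0 T1 T2 T3 (chain q k0 k1 T0 T1 v) := by
  have hq := h.q_ne
  have hk0 := h.k0_ne
  have hk1 := h.k1_ne
  have hk2 := h.k2_ne
  have hk3 := h.k3_ne
  have r1e := chain_even q k0 k1 hk1 T0 T1 v
  have r0o := chain_odd q k0 k1 hq hk0 T0 T1 v
  have hm0 : chain q k0 k1 T0 T1 v 0 = v := by rw [chain]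
  set m := chain q k0 k1 T0 T1 v with hm
  clear_value m
  have r0e : ∀ i, Even i → T0 (m i) =
      (k0⁻¹ * (q ^ i)⁻¹ * (1 - q ^ i) * (1 - k0 ^ 2 * q ^ i)) • m (i - 1)
      + (k0 + k0⁻¹ - k0⁻¹ * (q ^ i)⁻¹) • m i := by
    intro i hi
    rcases i with _ | n
    · simp [hm0, h0]
    · have e1 := r0o n (by grind)
      have e2 : m (n + 1) = m n - (k0 * q ^ (n + 1)) • T0 (m n) := by
        rw [e1]; match_scalars <;> field_simp; ring
      have e3 : T0 (m (n + 1)) = T0 (m n) - (k0 * q ^ (n + 1)) • T0 (T0 (m n)) := by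
        conv_lhs => rw [e2]
        rw [map_sub, map_smul]
      rw [e3, h.sq0, e1, Nat.add_sub_cancel]
      match_scalars <;> field_simp <;> ring
  have r1o : ∀ j, T1 (m (2 * j + 1)) = k1⁻¹ • m (2 * j + 1) := by
    intro j
    induction j with
    | zero =>
      have e1 := r1e 0 (by simp)
      have e2 : m 1 = k1 • (T1 (m 0) - k1 • m 0) := by
        rw [e1]; simp [smul_smul, hk1]
      simp only [mul_zero, zero_add]
      rw [e2, map_smul, map_sub, map_smul, h.sq1]
      match_scalars <;> field_simp
      ring
    | succ j ih =>
      have e1 := r1e (2 * j + 2) ⟨j + 1, by ring⟩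
      rw [show 2 * j + 2 - 1 = 2 * j + 1 from rfl] at e1
      rw [show 2 * (j + 1) + 1 = 2 * j + 2 + 1 by ring]
      generalize hc : k1 * (1 - q ^ (2 * j + 2)) * (1 - k0 ^ 2 * q ^ (2 * j + 2)) = c at e1
      have e2 : m (2 * j + 2 + 1) =
          k1 • (T1 (m (2 * j + 2)) - k1 • m (2 * j + 2) + c • m (2 * j + 1)) := by
        rw [e1]; match_scalars <;> field_simp <;> ring
      rw [e2, map_smul, map_add, map_sub, map_smul, map_smul, h.sq1, ih]
      match_scalars <;> field_simp
      ring
  have r1o' : ∀ i, Odd i → T1 (m i) = k1⁻¹ • m i := by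
    rintro i ⟨j, rfl⟩; exact r1o j
  -- `T₂` at an even index is forced by the product relation once `T₃` is known there.
  have step2e : ∀ i, Even i → T3 (m i) = k3 • m i →
      T2 (m i) = (k0⁻¹ * k1⁻¹ * k3⁻¹ * (q ^ (i + 1))⁻¹) • (m i - m (i + 1)) := by
    intro i hi h3i
    have inv0 : ∀ x, T0 ((k0 + k0⁻¹) • x - T0 x) = x := fun x => by
      rw [map_sub, map_smul, h.sq0]; abel
    have inv0' : ∀ x, (k0 + k0⁻¹) • T0 x - T0 (T0 x) = x := fun x => by rw [h.sq0]; abel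
    have inv1' : ∀ x, (k1 + k1⁻¹) • T1 x - T1 (T1 x) = x := fun x => by rw [h.sq1]; abel
    have e1 := h.prod (m i)
    rw [h3i, map_smul, map_smul, map_smul] at e1
    have e2 : T0 (T1 (T2 (m i))) = (k3⁻¹ * q⁻¹) • m i := by
      rw [mul_smul, ← e1, smul_smul, inv_mul_cancel₀ hk3, one_smul]
    have e3 := inv0' (T1 (T2 (m i)))
    rw [e2, map_smul] at e3
    have e4 := inv1' (T2 (m i))
    rw [← e3] at e4
    simp only [map_sub, map_smul] at e4
    have hpred : (1 - q ^ i) • T1 (m (i - 1)) = ((1 - q ^ i) * k1⁻¹) • m (i - 1) := by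
      rcases i with _ | n
      · simp
      · rw [Nat.add_sub_cancel, r1o' n (by grind), smul_smul]
    have e5 : T1 (T0 (m i)) =
        (k0⁻¹ * (q ^ i)⁻¹ * (1 - k0 ^ 2 * q ^ i)) • ((1 - q ^ i) • T1 (m (i - 1)))
        + (k0 + k0⁻¹ - k0⁻¹ * (q ^ i)⁻¹) • T1 (m i) := by
      rw [r0e i hi, map_add, map_smul, map_smul]
      match_scalars <;> ring
    rw [e5, hpred, r1e i hi, r0e i hi] at e4
    rw [← e4]
    match_scalars <;> field_simp <;> ring
  have step2o : ∀ i, Odd i → T3 (m (i - 1)) = k3 • m (i - 1) →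
      T2 (m i) = ((k0 * k1 * k3 * q ^ i)⁻¹ * (k0 * k1 * k3 * q ^ i - k2)
        * (k0 * k1 * k3 * q ^ i - k2⁻¹)) • m (i - 1)
      + (k2 + k2⁻¹ - k0⁻¹ * k1⁻¹ * k3⁻¹ * (q ^ i)⁻¹) • m i := by
    intro i hi h3i
    rcases i with _ | n
    · simp at hi
    rw [Nat.add_sub_cancel] at h3i ⊢
    have e1 := step2e n (by grind) h3i
    have e2 : m (n + 1) = m n - (k0 * k1 * k3 * q ^ (n + 1)) • T2 (m n) := by
      rw [e1]; match_scalars <;> field_simp; ring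
    have e3 : T2 (m (n + 1)) = T2 (m n) - (k0 * k1 * k3 * q ^ (n + 1)) • T2 (T2 (m n)) := by
      conv_lhs => rw [e2]
      rw [map_sub, map_smul]
    rw [e3, h.sq2, e1]
    match_scalars <;> field_simp <;> ring
  -- The product relation at `m i`, `i` odd, evaluates `T₃` on `m i - m (i + 1)`.
  have step3 : ∀ i, Odd i → T3 (m (i - 1)) = k3 • m (i - 1) →
      T3 (m i - m (i + 1)) = k3⁻¹ • m i - (k3⁻¹ * (k0 * k1 * k3 * q ^ i - k2)
        * (k0 * k1 * k3 * q ^ i - k2⁻¹)) • m (i - 1) := by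
    intro i hi h3i
    have inv2' : ∀ x, T2 ((k2 + k2⁻¹) • x - T2 x) = x := fun x => by
      rw [map_sub, map_smul, h.sq2]; abel
    have e1 := h.prod1 ((k2 + k2⁻¹) • m i - T2 (m i))
    rw [inv2', r1o' i hi, map_smul, r0o i hi, map_smul, map_smul, step2o i hi h3i] at e1
    have e2 : T3 (m i - m (i + 1)) = (k1 * (k0 * q ^ (i + 1))) •
        (k1⁻¹ • (k0⁻¹ * (q ^ (i + 1))⁻¹) • T3 (m i - m (i + 1))) := by
      rw [smul_smul, smul_smul]
      conv_lhs => rw [← one_smul F (T3 (m i - m (i + 1)))]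
      congr 1
      field_simp
    rw [e2, e1]
    match_scalars <;> field_simp <;> ring
  have r3e : ∀ j, T3 (m (2 * j)) = k3 • m (2 * j) := by
    intro j
    induction j with
    | zero => simp [hm0, h3]
    | succ j ih =>
      have e1 := step3 (2 * j + 1) ⟨j, rfl⟩ ih
      have e2 := h.sq3 (m (2 * j + 1) - m (2 * j + 1 + 1))
      rw [Nat.add_sub_cancel] at e1
      rw [e1] at e2
      simp only [map_sub, map_smul] at e1 e2
      rw [ih] at e2
      have e3 : T3 (m (2 * j + 1)) = T3 (m (2 * j + 1 + 1)) + (k3⁻¹ • m (2 * j + 1) -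
          (k3⁻¹ * (k0 * k1 * k3 * q ^ (2 * j + 1) - k2)
            * (k0 * k1 * k3 * q ^ (2 * j + 1) - k2⁻¹)) • m (2 * j)) := by
        rw [← e1]; abel
      rw [e3] at e2
      rw [show 2 * (j + 1) = 2 * j + 1 + 1 by ring]
      have e4 := congrArg (fun x => k3 • x) e2
      rw [← sub_eq_zero] at e4 ⊢
      rw [← e4]
      match_scalars <;> field_simp <;> ring
  have r3e' : ∀ i, Even i → T3 (m i) = k3 • m i := by
    rintro i ⟨j, rfl⟩; rw [← two_mul]; exact r3e j
  have hpe : ∀ i, Odd i → Even (i - 1) := by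
    rintro i ⟨j, rfl⟩; simp
  refine ⟨r0e, r0o, r1e, r1o', fun i hi => step2e i hi (r3e' i hi),
    fun i hi => step2o i hi (r3e' _ (hpe i hi)), r3e', fun i hi => ?_⟩
  have e1 := step3 i hi (r3e' _ (hpe i hi))
  rw [map_sub, r3e' (i + 1) (by grind), sub_eq_iff_eq_add] at e1
  rw [e1]
  match_scalars <;> ring

end Quad

/-! ### Flags and linear independence -/

/-- The span of the first `n` terms of a sequence of vectors. -/
def flag (m : ℕ → V) (n : ℕ) : Submodule F V := Submodule.span F (m '' Set.Iio n)

lemma mem_flag (m : ℕ → V) {i n : ℕ} (h : i < n) : m i ∈ flag (F := F) m n :=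
  Submodule.subset_span ⟨i, h, rfl⟩

lemma flag_mono (m : ℕ → V) {i n : ℕ} (h : i ≤ n) : flag (F := F) m i ≤ flag m n :=
  Submodule.span_mono (Set.image_mono (Set.Iio_subset_Iio h))

lemma flag_zero (m : ℕ → V) : flag (F := F) m 0 = ⊥ := by
  simp [flag]

lemma mem_flag_succ {m : ℕ → V} {n : ℕ} {x : V} :
    x ∈ flag (F := F) m (n + 1) ↔ ∃ c : F, ∃ w ∈ flag (F := F) m n, x = c • m n + w := by
  have : Set.Iio (n + 1) = insert n (Set.Iio n) := by
    ext a; simp only [Set.mem_Iio, Set.mem_insert_iff]; omega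
  rw [flag, this, Set.image_insert_eq, Submodule.mem_span_insert]
  rfl

lemma finrank_flag_le (m : ℕ → V) (n : ℕ) : Module.finrank F (flag (F := F) m n) ≤ n := by
  have : m '' Set.Iio n = Set.range (fun i : Fin n => m i) := by
    ext x; constructor
    · rintro ⟨i, hi, rfl⟩; exact ⟨⟨i, hi⟩, rfl⟩
    · rintro ⟨i, rfl⟩; exact ⟨i, i.2, rfl⟩
  rw [flag, this]
  have h := finrank_range_le_card (R := F) (fun i : Fin n => m i)
  rw [Fintype.card_fin] at h
  exact h

lemma map_flag_le {m : ℕ → V} {n : ℕ} {T : Module.End F V} {U : Submodule F V}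
    (h : ∀ j < n, T (m j) ∈ U) : ∀ w ∈ flag (F := F) m n, T w ∈ U := by
  have : flag m n ≤ U.comap T := by
    rw [flag, Submodule.span_le]
    rintro _ ⟨j, hj, rfl⟩
    exact h j hj
  exact this

/-- Vectors with distinct leading terms in a flag are linearly independent. -/
lemma linearIndependent_of_flag (U : ℕ → Submodule F V) (y : ℕ → V) (n : ℕ)
    (h1 : ∀ i j, i < j → j < n → y i ∈ U j) (h2 : ∀ j < n, y j ∉ U j) :
    LinearIndependent F (fun i : Fin n => y i) := by
  induction n with
  | zero => exact linearIndependent_empty_type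
  | succ n ih =>
    rw [linearIndependent_finSucc']
    refine ⟨ih (fun i j hij hj => h1 i j hij (by omega)) (fun j hj => h2 j (by omega)),
      fun hmem => h2 n (by omega) ?_⟩
    have hle : Submodule.span F (Set.range (Fin.init fun i : Fin (n + 1) => y i)) ≤ U n := by
      rw [Submodule.span_le]
      rintro _ ⟨i, rfl⟩
      exact h1 i n i.2 (by omega)
    exact hle hmem

/-- If the kernel of `T - μ` has more than half the dimension, and `T` raises the leading term of
each even basis vector but the last, then `T` acts as `μ` on the top of the flag: otherwise the
vectors `(T - μ) m₀, (T - μ) m₂, …` would give `T - μ` too large a rank. -/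
lemma top_eigen_of_big_ker {m : ℕ → V} {p : ℕ} [FiniteDimensional F V]
    (hdim : Module.finrank F V = 2 * p + 1)
    (hm : ∀ n ≤ 2 * p, m n ∉ flag (F := F) m n) {T : Module.End F V} {μ : F}
    (hker : p + 1 ≤ Module.finrank F (LinearMap.ker (T - μ • (1 : Module.End F V))))
    (hT : ∀ j < p, ∃ c : F, c ≠ 0 ∧
      T (m (2 * j)) - c • m (2 * j + 1) ∈ flag (F := F) m (2 * j + 1)) :
    T (m (2 * p)) - μ • m (2 * p) ∈ flag (F := F) m (2 * p) := by
  by_contra hcon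
  have hli : LinearIndependent F
      (fun i : Fin (p + 1) => (T - μ • (1 : Module.End F V)) (m (2 * (i : ℕ)))) := by
    refine linearIndependent_of_flag (fun j => flag m (2 * j))
      (fun j => (T - μ • (1 : Module.End F V)) (m (2 * j))) (p + 1) ?_ ?_
    · intro i j hij hj
      obtain ⟨c, -, hc⟩ := hT i (by omega)
      have e1 : (T - μ • (1 : Module.End F V)) (m (2 * i)) =
          (T (m (2 * i)) - c • m (2 * i + 1)) + c • m (2 * i + 1) - μ • m (2 * i) := by
        simp
      simp only [e1]
      exact Submodule.sub_mem _ (Submodule.add_mem _ (flag_mono m (by omega) hc)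
        (Submodule.smul_mem _ _ (mem_flag m (by omega))))
        (Submodule.smul_mem _ _ (mem_flag m (by omega)))
    · intro j hj hmem
      rcases Nat.lt_succ_iff_lt_or_eq.mp hj with hj | rfl
      · obtain ⟨c, hc0, hc⟩ := hT j hj
        refine hm (2 * j + 1) (by omega) ?_
        have e1 : m (2 * j + 1) = c⁻¹ • ((T - μ • (1 : Module.End F V)) (m (2 * j))
            - (T (m (2 * j)) - c • m (2 * j + 1)) + μ • m (2 * j)) := by
          simp [smul_smul, hc0]
        rw [e1]
        exact Submodule.smul_mem _ _ (Submodule.add_mem _ (Submodule.sub_mem _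
          (flag_mono m (by omega) hmem) hc) (Submodule.smul_mem _ _ (mem_flag m (by omega))))
      · exact hcon (by simpa using hmem)
  have h1 := finrank_span_eq_card hli
  have h2 : Submodule.span F (Set.range
      (fun i : Fin (p + 1) => (T - μ • (1 : Module.End F V)) (m (2 * (i : ℕ))))) ≤
      LinearMap.range (T - μ • (1 : Module.End F V)) := by
    rw [Submodule.span_le]
    rintro _ ⟨i, rfl⟩
    exact ⟨_, rfl⟩
  have h3 := Submodule.finrank_mono h2
  have h4 := LinearMap.finrank_range_add_finrank_ker (T - μ • (1 : Module.End F V))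
  rw [h1, Fintype.card_fin] at h3
  omega

/-! ### The basis property and the product of the parameters -/

/-- Each operator moves the flag up by at most one step. -/
lemma Rel.mem_flag_add_two {m : ℕ → V} (h : Rel q k0 k1 k2 k3 T0 T1 T2 T3 m) (j : ℕ) :
    T0 (m j) ∈ flag (F := F) m (j + 2) ∧ T1 (m j) ∈ flag (F := F) m (j + 2) ∧
    T2 (m j) ∈ flag (F := F) m (j + 2) ∧ T3 (m j) ∈ flag (F := F) m (j + 2) := by
  have a : ∀ c : F, c • m (j - 1) ∈ flag (F := F) m (j + 2) := fun c =>
    Submodule.smul_mem _ _ (mem_flag m (by omega))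
  have b : ∀ c : F, c • m j ∈ flag (F := F) m (j + 2) := fun c =>
    Submodule.smul_mem _ _ (mem_flag m (by omega))
  have c : ∀ c : F, c • m (j + 1) ∈ flag (F := F) m (j + 2) := fun c =>
    Submodule.smul_mem _ _ (mem_flag m (by omega))
  rcases Nat.even_or_odd j with hj | hj
  · rw [h.r0e j hj, h.r1e j hj, h.r2e j hj, h.r3e j hj, smul_sub]
    exact ⟨add_mem (a _) (b _), add_mem (add_mem (a _) (b _)) (c _), sub_mem (b _) (c _), b _⟩
  · rw [h.r0o j hj, h.r1o j hj, h.r2o j hj, h.r3o j hj, smul_sub]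
    exact ⟨sub_mem (b _) (c _), b _, add_mem (a _) (b _), add_mem (add_mem (a _) (b _)) (c _)⟩

/-- If some `m n` depended on its predecessors, those would span an invariant subspace of
dimension at most `n`. -/
lemma Rel.notMem_flag {m : ℕ → V} (h : Rel q k0 k1 k2 k3 T0 T1 T2 T3 m)
    (hQ : ∀ W : Submodule F V, (∀ w ∈ W, T0 w ∈ W ∧ T1 w ∈ W ∧ T2 w ∈ W ∧ T3 w ∈ W) →
      W = ⊥ ∨ W = ⊤) (h0 : m 0 ≠ 0) {n : ℕ} (hn : n < Module.finrank F V) :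
    m n ∉ flag (F := F) m n := by
  intro hmem
  rcases Nat.eq_zero_or_pos n with rfl | hpos
  · rw [flag_zero] at hmem; exact h0 (by simpa using hmem)
  have hle : flag (F := F) m (n + 1) ≤ flag m n := by
    intro x hx
    obtain ⟨c, w, hw, rfl⟩ := mem_flag_succ.mp hx
    exact add_mem (Submodule.smul_mem _ _ hmem) hw
  have hinv : ∀ j < n, flag (F := F) m (j + 2) ≤ flag m n := fun j hj =>
    (flag_mono m (by omega)).trans hle
  have key := hQ (flag m n) fun w hw =>
    ⟨map_flag_le (fun j hj => hinv j hj (h.mem_flag_add_two j).1) w hw,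
     map_flag_le (fun j hj => hinv j hj (h.mem_flag_add_two j).2.1) w hw,
     map_flag_le (fun j hj => hinv j hj (h.mem_flag_add_two j).2.2.1) w hw,
     map_flag_le (fun j hj => hinv j hj (h.mem_flag_add_two j).2.2.2) w hw⟩
  rcases key with hb | ht
  · have := mem_flag (F := F) m hpos
    rw [hb] at this
    exact h0 (by simpa using this)
  · have := finrank_flag_le (F := F) m n
    rw [ht, finrank_top] at this
    omega

/-- On an irreducible module of odd dimension `2p + 1`, if `T₁ - k₁` and `T₂ - k₂` have kernels of
dimension greater than half, then the chain generated by a common eigenvector of `T₀` and `T₃`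
forces the product of the parameters, and its term of index `2p + 1` lies in the span of the first
`2p`. -/
lemma Quad.prod_param (h : Quad q k0 k1 k2 k3 T0 T1 T2 T3) {p : ℕ} [FiniteDimensional F V]
    (hdim : Module.finrank F V = 2 * p + 1)
    (hker1 : p + 1 ≤ Module.finrank F (LinearMap.ker (T1 - k1 • (1 : Module.End F V))))
    (hker2 : p + 1 ≤ Module.finrank F (LinearMap.ker (T2 - k2 • (1 : Module.End F V))))
    {m : ℕ → V} (hr : Rel q k0 k1 k2 k3 T0 T1 T2 T3 m) (hm0 : m 0 ≠ 0) :
    k0 * k1 * k2 * k3 = (q ^ (2 * p + 1))⁻¹ ∧ m (2 * p + 1) ∈ flag (F := F) m (2 * p) := by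
  have hq := h.q_ne
  have hk0 := h.k0_ne
  have hk1 := h.k1_ne
  have hk2 := h.k2_ne
  have hk3 := h.k3_ne
  have hm : ∀ n ≤ 2 * p, m n ∉ flag (F := F) m n := fun n hn =>
    hr.notMem_flag h.irr hm0 (by omega)
  have hpred : ∀ c : F, (c * (1 - q ^ (2 * p))) • m (2 * p - 1) ∈ flag (F := F) m (2 * p) := by
    intro c
    rcases p with _ | p
    · simp
    · exact Submodule.smul_mem _ _ (mem_flag m (by omega))
  have t1 := top_eigen_of_big_ker hdim hm hker1 (fun j hj => ⟨k1⁻¹, inv_ne_zero hk1, by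
    rw [hr.r1e _ (even_two_mul j), add_sub_cancel_right]
    exact add_mem (Submodule.smul_mem _ _ (mem_flag m (by omega)))
      (Submodule.smul_mem _ _ (mem_flag m (by omega)))⟩)
  have t2 := top_eigen_of_big_ker hdim hm hker2 (fun j hj =>
    ⟨-(k0⁻¹ * k1⁻¹ * k3⁻¹ * (q ^ (2 * j + 1))⁻¹), by
      simp [hk0, hk1, hk3, hq], by
    rw [hr.r2e _ (even_two_mul j), smul_sub, neg_smul, sub_neg_eq_add, sub_add_cancel]
    exact Submodule.smul_mem _ _ (mem_flag m (by omega))⟩)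
  have hu : m (2 * p + 1) ∈ flag (F := F) m (2 * p) := by
    have e1 : m (2 * p + 1) = k1 • ((T1 (m (2 * p)) - k1 • m (2 * p)) +
        ((k1 * (1 - k0 ^ 2 * q ^ (2 * p))) * (1 - q ^ (2 * p))) • m (2 * p - 1)) := by
      rw [hr.r1e _ (even_two_mul p)]
      match_scalars <;> field_simp <;> ring
    rw [e1]
    exact Submodule.smul_mem _ _ (add_mem t1 (hpred _))
  refine ⟨?_, hu⟩
  rw [hr.r2e _ (even_two_mul p)] at t2
  by_contra hne
  have hc : k0⁻¹ * k1⁻¹ * k3⁻¹ * (q ^ (2 * p + 1))⁻¹ - k2 ≠ 0 := by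
    intro h0
    apply hne
    rw [← sub_eq_zero.mp h0]
    field_simp
  set c := k0⁻¹ * k1⁻¹ * k3⁻¹ * (q ^ (2 * p + 1))⁻¹ with hcdef
  refine hm (2 * p) le_rfl ?_
  have e1 : m (2 * p) = (c - k2)⁻¹ • ((c • (m (2 * p) - m (2 * p + 1)) - k2 • m (2 * p))
      + c • m (2 * p + 1)) := by
    match_scalars <;> field_simp
    ring
  rw [e1]
  exact Submodule.smul_mem _ _ (add_mem t2 (Submodule.smul_mem _ _ hu))

/-! ### Termination of the chain -/

/-- `T₃ T₀` is triangular on the flag, with diagonal entries `k₀ k₃ qʲ` at even `j`. -/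
lemma Rel.X_even {m : ℕ → V} (hr : Rel q k0 k1 k2 k3 T0 T1 T2 T3 m) (hq : q ≠ 0) (hk0 : k0 ≠ 0)
    {j : ℕ} (hj : Even j) :
    T3 (T0 (m j)) - (k0 * k3 * q ^ j) • m j ∈ flag (F := F) m j := by
  rcases j with _ | n
  · have e1 := hr.r0e 0 (by simp)
    simp only [pow_zero, sub_self, mul_zero, zero_mul, zero_smul, zero_add, inv_one, mul_one,
      add_sub_cancel_right] at e1
    rw [e1, map_smul, hr.r3e 0 (by simp), smul_smul]
    simp
  · rw [hr.r0e _ hj, map_add, map_smul, map_smul, hr.r3e _ hj, Nat.add_sub_cancel,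
      hr.r3o n (by grind)]
    have a : ∀ c : F, c • m (n - 1) ∈ flag (F := F) m (n + 1) := fun c =>
      Submodule.smul_mem _ _ (mem_flag m (by omega))
    have b : ∀ c : F, c • m n ∈ flag (F := F) m (n + 1) := fun c =>
      Submodule.smul_mem _ _ (mem_flag m (by omega))
    generalize -(k3⁻¹ * (k0 * k1 * k3 * q ^ n - k2) * (k0 * k1 * k3 * q ^ n - k2⁻¹)) = c
    convert add_mem (a ((k0⁻¹ * (q ^ (n + 1))⁻¹ * (1 - q ^ (n + 1))
      * (1 - k0 ^ 2 * q ^ (n + 1))) * c)) (b ((k0⁻¹ * (q ^ (n + 1))⁻¹ * (1 - q ^ (n + 1))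
      * (1 - k0 ^ 2 * q ^ (n + 1))) * k3⁻¹)) using 1
    match_scalars <;> field_simp
    ring

/-- `T₃ T₀` is triangular on the flag, with diagonal entries `(k₀ k₃ qʲ⁺¹)⁻¹` at odd `j`. -/
lemma Rel.X_odd {m : ℕ → V} (hr : Rel q k0 k1 k2 k3 T0 T1 T2 T3 m) {j : ℕ} (hj : Odd j) :
    T3 (T0 (m j)) - (k0⁻¹ * k3⁻¹ * (q ^ (j + 1))⁻¹) • m j = (-((k0⁻¹ * (q ^ (j + 1))⁻¹) *
      (k3⁻¹ * (k0 * k1 * k3 * q ^ j - k2) * (k0 * k1 * k3 * q ^ j - k2⁻¹)))) • m (j - 1) := by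
  rw [hr.r0o j hj, map_smul, map_sub, hr.r3o j hj, hr.r3e (j + 1) (by grind)]
  match_scalars <;> ring

/-- A vector of the flag on which `X` acts by a scalar different from all diagonal entries of the
triangular operator `X` vanishes. -/
lemma eq_zero_of_triangular {m : ℕ → V} {X : Module.End F V} {θ : ℕ → F} {c : F} {u : V}
    (hu : X u = c • u) (n : ℕ) (hX : ∀ j < n, X (m j) - θ j • m j ∈ flag (F := F) m j)
    (hθ : ∀ j < n, θ j ≠ c) (hmem : u ∈ flag (F := F) m n) : u = 0 := by
  induction n with
  | zero => rw [flag_zero] at hmem; simpa using hmem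
  | succ n ih =>
    refine ih (fun j hj => hX j (by omega)) (fun j hj => hθ j (by omega)) ?_
    obtain ⟨x, w, hw, rfl⟩ := mem_flag_succ.mp hmem
    have hXw : X w ∈ flag (F := F) m n := by
      refine map_flag_le (fun j hj => ?_) w hw
      rw [← sub_add_cancel (X (m j)) (θ j • m j)]
      exact add_mem (flag_mono m hj.le (hX j (by omega)))
        (Submodule.smul_mem _ _ (mem_flag m hj))
    rw [map_add, map_smul] at hu
    have hne := sub_ne_zero.mpr (hθ n (by omega))
    have e1 : x • m n = (θ n - c)⁻¹ • (c • w - X w - x • (X (m n) - θ n • m n)) := by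
      have e2 : X w = c • (x • m n + w) - x • X (m n) := by rw [← hu]; abel
      rw [e2]
      match_scalars <;> field_simp <;> ring
    rw [e1]
    exact add_mem (Submodule.smul_mem _ _ (sub_mem (sub_mem (Submodule.smul_mem _ _ hw) hXw)
      (Submodule.smul_mem _ _ (hX n (by omega))))) hw

/-- The chain stops: its term of index `2p + 1` is zero. If not, that term is a common eigenvector
of `T₁` and `T₂`, and the product formula for the chain it generates gives
`(k₀ k₃)² = q ^ (-2(2p+1))`. Its `T₃ T₀`-eigenvalue is then none of the diagonal entries of `T₃ T₀`
on the span of the first `2p` terms, to which it belongs. -/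
lemma Quad.chain_end (h : Quad q k0 k1 k2 k3 T0 T1 T2 T3) (hroot : ∀ n : ℕ, 1 ≤ n → q ^ n ≠ 1)
    {p : ℕ} [FiniteDimensional F V] (hdim : Module.finrank F V = 2 * p + 1)
    (hker0 : p + 1 ≤ Module.finrank F (LinearMap.ker (T0 - k0 • (1 : Module.End F V))))
    (hker1 : p + 1 ≤ Module.finrank F (LinearMap.ker (T1 - k1 • (1 : Module.End F V))))
    (hker2 : p + 1 ≤ Module.finrank F (LinearMap.ker (T2 - k2 • (1 : Module.End F V))))
    (hker3 : p + 1 ≤ Module.finrank F (LinearMap.ker (T3 - k3 • (1 : Module.End F V))))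
    {m : ℕ → V} (hr : Rel q k0 k1 k2 k3 T0 T1 T2 T3 m) (hm0 : m 0 ≠ 0) :
    m (2 * p + 1) = 0 := by
  have hq := h.q_ne
  have hk0 := h.k0_ne
  have hk1 := h.k1_ne
  have hk2 := h.k2_ne
  have hk3 := h.k3_ne
  obtain ⟨hprod, hu⟩ := h.prod_param hdim hker1 hker2 hr hm0
  by_contra hne
  have hodd : Odd (2 * p + 1) := ⟨p, rfl⟩
  have hγ : k0 * k1 * k3 * q ^ (2 * p + 1) = k2⁻¹ := by
    apply eq_inv_of_mul_eq_one_left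
    rw [mul_right_comm, show k0 * k1 * k3 * k2 = k0 * k1 * k2 * k3 by
      ring, hprod, inv_mul_cancel₀ (pow_ne_zero _ hq)]
  have u1 := hr.r1o _ hodd
  have u2 : T2 (m (2 * p + 1)) = k2⁻¹ • m (2 * p + 1) := by
    have hγ' : k0⁻¹ * k1⁻¹ * k3⁻¹ * (q ^ (2 * p + 1))⁻¹ = k2 := by
      rw [← inv_inj, ← hγ]; simp only [mul_inv, inv_inv]
    rw [hr.r2o _ hodd, hγ, hγ']
    simp
  have hrot := (h.rotate.prod_param hdim hker3 hker0 (h.rotate.rel_chain u2 u1)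
    (by rw [chain]; exact hne)).1
  have hsq : (k0 * k3) ^ 2 * q ^ (2 * (2 * p + 1)) = 1 := by
    have e1 : (k0 * k3) ^ 2 = (k0 * k1 * k2 * k3) * (k2⁻¹ * k3 * k0 * k1⁻¹) := by
      field_simp
    have hQ := pow_ne_zero (2 * p + 1) hq
    rw [e1, hprod, hrot, two_mul (2 * p + 1), pow_add q (2 * p + 1) (2 * p + 1)]
    generalize q ^ (2 * p + 1) = Q at hQ
    field_simp
  have hX : (T3 * T0) (m (2 * p + 1)) =
      (k0⁻¹ * k3⁻¹ * (q ^ (2 * p + 1 + 1))⁻¹) • m (2 * p + 1) := by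
    rw [Module.End.mul_apply, ← sub_eq_zero, hr.X_odd hodd, hγ]
    simp
  have hinj : ∀ a b : ℕ, a < b → q ^ a ≠ q ^ b := by
    intro a b hab heq
    apply hroot (b - a) (by omega)
    apply mul_left_cancel₀ (pow_ne_zero a hq)
    rw [← pow_add, mul_one, heq]
    congr 1
    omega
  refine hne (eq_zero_of_triangular (m := m)
    (θ := fun j => if Even j then k0 * k3 * q ^ j else k0⁻¹ * k3⁻¹ * (q ^ (j + 1))⁻¹)
    hX (2 * p) ?_ ?_ hu)
  · intro j hj
    rw [Module.End.mul_apply]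
    split_ifs with he
    · exact hr.X_even hq hk0 he
    · rw [Nat.not_even_iff_odd] at he
      rw [hr.X_odd he]
      have : 0 < j := he.pos
      exact Submodule.smul_mem _ _ (mem_flag m (by omega))
  · intro j hj
    split_ifs with he
    · intro heq
      apply hinj (2 * p + 1 + 1 + j) (2 * (2 * p + 1)) (by omega)
      have e1 : (k0 * k3) ^ 2 * q ^ (2 * p + 1 + 1 + j) = 1 := by
        rw [pow_add]
        calc _ = (k0 * k3) * q ^ (2 * p + 1 + 1) * (k0 * k3 * q ^ j) := by ring
          _ = 1 := by rw [heq]; field_simp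
      exact mul_left_cancel₀ (pow_ne_zero 2 (mul_ne_zero hk0 hk3)) (e1.trans hsq.symm)
    · intro heq
      apply hinj (j + 1) (2 * p + 1 + 1) (by omega)
      exact inv_injective (mul_left_cancel₀
        (mul_ne_zero (inv_ne_zero hk0) (inv_ne_zero hk3)) heq)
/-! ### Choice of parameters and comparison with `O(k₀,k₁,k₂,k₃)` -/

/-- Each `Tᵢ` on an irreducible module of odd dimension has an eigenvalue `k` with
`(Tᵢ - k)(Tᵢ - k⁻¹) = 0` whose eigenspace has more than half the dimension: `Tᵢ + Tᵢ⁻¹` is scalar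
by Schur's lemma, and the eigenspaces for `k` and `k⁻¹` have total dimension at least `dim V`. -/
lemma exists_param [IsAlgClosed F] {T : ZMod 4 → Module.End F V} (hT : IsRep q T)
    (hirr : Irred T) {p : ℕ} [FiniteDimensional F V] (hdim : Module.finrank F V = 2 * p + 1)
    (i : ZMod 4) :
    ∃ k : F, k ≠ 0 ∧ (∀ x, T i (T i x) = (k + k⁻¹) • T i x - x) ∧
      p + 1 ≤ Module.finrank F (LinearMap.ker (T i - k • (1 : Module.End F V))) := by
  have : Nontrivial V := Module.nontrivial_of_finrank_pos (R := F) (by omega)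
  obtain ⟨c, hc⟩ := Module.End.exists_eigenvalue (T i + Ring.inverse (T i))
  have hscal : ∀ x, (T i + Ring.inverse (T i)) x = c • x := by
    rcases hirr.2 (Module.End.eigenspace (T i + Ring.inverse (T i)) c) (fun j w hw => by
      rw [Module.End.mem_eigenspace_iff] at hw ⊢
      have := LinearMap.congr_fun (hT.2.1 i j).eq w
      rw [Module.End.mul_apply, Module.End.mul_apply, hw, map_smul] at this
      exact this) with hb | ht
    · exact absurd hb hc
    · intro x
      rw [← Module.End.mem_eigenspace_iff, ht]
      trivial
  have hinv : ∀ x, T i (Ring.inverse (T i) x) = x := fun x => by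
    have := LinearMap.congr_fun (Ring.mul_inverse_cancel _ (hT.1 i)) x
    simpa using this
  have hinv' : ∀ x, Ring.inverse (T i) (T i x) = x := fun x => by
    have := LinearMap.congr_fun (Ring.inverse_mul_cancel _ (hT.1 i)) x
    simpa using this
  have hsq : ∀ x, T i (T i x) = c • T i x - x := fun x => by
    have := congrArg (T i) (hscal x)
    rw [LinearMap.add_apply, map_add, hinv, map_smul] at this
    rw [← this]; abel
  obtain ⟨k, hk⟩ := Module.End.exists_eigenvalue (T i)
  obtain ⟨x, hx⟩ := hk.exists_hasEigenvector
  have hx1 := hx.apply_eq_smul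
  have hx0 := hx.2
  have hk0 : k ≠ 0 := by
    rintro rfl
    apply hx0
    rw [← hinv' x, hx1]; simp
  have hck : c = k + k⁻¹ := by
    have e1 := hsq x
    rw [hx1, map_smul, hx1] at e1
    have e2 : (k * k - c * k + 1) • x = 0 := by
      rw [← sub_eq_zero] at e1
      rw [← e1]; module
    have e3 := (smul_eq_zero.mp e2).resolve_right hx0
    field_simp
    linear_combination -e3
  subst hck
  by_cases hbig : p + 1 ≤ Module.finrank F (LinearMap.ker (T i - k • (1 : Module.End F V)))
  · exact ⟨k, hk0, hsq, hbig⟩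
  · refine ⟨k⁻¹, inv_ne_zero hk0, fun x => by rw [inv_inv, add_comm k⁻¹, hsq], ?_⟩
    have h1 := LinearMap.finrank_range_add_finrank_ker (T i - k⁻¹ • (1 : Module.End F V))
    have h2 : LinearMap.range (T i - k⁻¹ • (1 : Module.End F V)) ≤
        LinearMap.ker (T i - k • (1 : Module.End F V)) := by
      rintro _ ⟨y, rfl⟩
      simp only [LinearMap.mem_ker, LinearMap.sub_apply, LinearMap.smul_apply,
        Module.End.one_apply, map_sub, map_smul, hsq]
      match_scalars <;> field_simp <;> ring
    have h3 := Submodule.finrank_mono h2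
    omega

/-- When the sequence is a basis up to index `2p` and vanishes at `2p + 1`, and the product of the
parameters is `q ^ (-2p-1)`, the relations become those of `O(k₀,k₁,k₂,k₃)`. -/
lemma exists_isO {T : ZMod 4 → Module.End F V} {p : ℕ}
    (hQ : Quad q k0 k1 k2 k3 (T 0) (T 1) (T 2) (T 3))
    (hprod : k0 * k1 * k2 * k3 = (q ^ (2 * p + 1))⁻¹) {m : ℕ → V}
    (hr : Rel q k0 k1 k2 k3 (T 0) (T 1) (T 2) (T 3) m) (hend : m (2 * p + 1) = 0)
    (S : (Fin (2 * p + 1) → F) ≃ₗ[F] V)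
    (hS : ∀ j : Fin (2 * p + 1), S (Pi.single j 1) = m j) :
    ∃ T' : ZMod 4 → Module.End F (Fin (2 * p + 1) → F),
      IsO q k0 k1 k2 k3 (2 * p) T' ∧ Iso T' T := by
  have hq := hQ.q_ne
  have hk0 := hQ.k0_ne
  have hk1 := hQ.k1_ne
  have hk2 := hQ.k2_ne
  have hk3 := hQ.k3_ne
  have he : ∀ j ≤ 2 * p + 1, S (e F (2 * p) j) = m j := by
    intro j hj
    rw [e]
    split_ifs with h
    · exact hS ⟨j, h⟩
    · rw [map_zero, show j = 2 * p + 1 by omega, hend]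
  have hT' : ∀ i x, S ((S.symm.toLinearMap ∘ₗ T i ∘ₗ S.toLinearMap) x) = T i (S x) := by
    intro i x; simp
  have hγ : ∀ i ≤ 2 * p + 1, k0 * k1 * k3 * q ^ i = k2⁻¹ * (q ^ (2 * p + 1 - i))⁻¹ := by
    intro i hi
    have hpow : q ^ (2 * p + 1) = q ^ i * q ^ (2 * p + 1 - i) := by
      rw [← pow_add]; congr 1; omega
    rw [hpow] at hprod
    have h1 := pow_ne_zero i hq
    have h2 := pow_ne_zero (2 * p + 1 - i) hq
    generalize q ^ (2 * p + 1 - i) = Q at *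
    generalize q ^ i = R at *
    field_simp at hprod ⊢
    linear_combination hprod
  have hγ' : ∀ i ≤ 2 * p + 1,
      k0⁻¹ * k1⁻¹ * k3⁻¹ * (q ^ i)⁻¹ = k2 * q ^ (2 * p + 1 - i) := by
    intro i hi
    have := congrArg Inv.inv (hγ i hi)
    simpa only [mul_inv, inv_inv] using this
  refine ⟨fun i => S.symm.toLinearMap ∘ₗ T i ∘ₗ S.toLinearMap,
    ⟨?_, ?_, ?_, ?_, ?_, ?_, ?_, ?_, ?_, ?_, ?_, ?_⟩, S, hT'⟩
  · intro i hi _ hi2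
    apply S.injective
    rw [hT', he i (by omega), hr.r0e i hi, map_add, map_smul, map_smul, he i (by omega),
      he (i - 1) (by omega)]
  · intro i hi hi2
    have := hi.pos
    apply S.injective
    rw [hT', he i (by omega), hr.r0o i hi, map_smul, map_sub, he i (by omega),
      he (i + 1) (by omega)]
  · apply S.injective
    rw [hT', he 0 (by omega), hr.r0e 0 (by simp), map_smul, he 0 (by omega)]
    simp
  · intro i hi _ hi2
    apply S.injective
    rw [hT', he i (by omega), hr.r1e i hi, map_add, map_add, map_smul, map_smul, map_smul,
      he i (by omega), he (i + 1) (by omega), he (i - 1) (by omega)]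
  · intro i hi hi2
    apply S.injective
    rw [hT', he i (by omega), hr.r1o i hi, map_smul, he i (by omega)]
  · apply S.injective
    rw [hT', he 0 (by omega), hr.r1e 0 (by simp), map_add, map_smul, map_smul, he 0 (by omega),
      he 1 (by omega)]
    simp
  · apply S.injective
    rw [hT', he _ (by omega), hr.r1e _ (even_two_mul p), map_add, map_smul, map_smul,
      he (2 * p) (by omega), he (2 * p - 1) (by omega), hend, smul_zero, add_zero]
  · intro i hi hi2
    apply S.injective
    rw [hT', he i (by omega), hr.r2e i hi, map_smul, map_sub, he i (by omega),
      he (i + 1) (by omega), hγ' (i + 1) (by omega),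
      show 2 * p + 1 - (i + 1) = 2 * p - i by omega]
  · intro i hi hi2
    have := hi.pos
    apply S.injective
    rw [hT', he i (by omega), hr.r2o i hi, map_add, map_smul, map_smul, he i (by omega),
      he (i - 1) (by omega), hγ' i (by omega), hγ i (by omega),
      show 2 * p - i + 1 = 2 * p + 1 - i by omega]
    have h2 := pow_ne_zero (2 * p + 1 - i) hq
    generalize q ^ (2 * p + 1 - i) = Q at *
    congr 2
    field_simp
    ring
  · apply S.injective
    rw [hT', he _ (by omega), hr.r2e _ (even_two_mul p), map_smul, he _ (by omega), hend,
      hγ' _ le_rfl]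
    simp
  · intro i hi hi2
    apply S.injective
    rw [hT', he i (by omega), hr.r3e i hi, map_smul, he i (by omega)]
  · intro i hi hi2
    have := hi.pos
    apply S.injective
    rw [hT', he i (by omega), hr.r3o i hi, map_add, map_add, map_smul, map_smul, map_smul,
      he i (by omega), he (i + 1) (by omega), he (i - 1) (by omega), hγ i (by omega)]
    have h2 := pow_ne_zero (2 * p + 1 - i) hq
    generalize q ^ (2 * p + 1 - i) = Q at *
    congr 3
    field_simp
    ring

end Chain

/-- every `(d+1)`-dimensional irreducible representation of `H_q`
(`d` even) is isomorphic to some `O(k₀,k₁,k₂,k₃)`. -/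
theorem statement18 [IsAlgClosed F] (q : F) (hq : q ≠ 0)
    (hroot : ∀ n : ℕ, 1 ≤ n → q ^ n ≠ 1)
    (d : ℕ) (hd : Even d)
    (V : Type u) [AddCommGroup V] [Module F V]
    (TV : ZMod 4 → Module.End F V) (hTV : IsRep q TV) (hirr : Irred TV)
    (hdim : Module.finrank F V = d + 1) :
    ∃ k0 k1 k2 k3 : F,
      k0 ≠ 0 ∧ k1 ≠ 0 ∧ k2 ≠ 0 ∧ k3 ≠ 0 ∧ k0 * k1 * k2 * k3 = (q ^ (d + 1))⁻¹ ∧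
      ∃ T : ZMod 4 → Module.End F (Fin (d + 1) → F),
        IsO q k0 k1 k2 k3 d T ∧ Iso T TV := by
  obtain ⟨p, hp⟩ := hd
  obtain rfl : d = 2 * p := by omega
  have : FiniteDimensional F V := Module.finite_of_finrank_pos (by omega)
  obtain ⟨k0, hk0, sq0, ker0⟩ := exists_param hTV hirr hdim 0
  obtain ⟨k1, hk1, sq1, ker1⟩ := exists_param hTV hirr hdim 1
  obtain ⟨k2, hk2, sq2, ker2⟩ := exists_param hTV hirr hdim 2
  obtain ⟨k3, hk3, sq3, ker3⟩ := exists_param hTV hirr hdim 3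
  have hQ : Quad q k0 k1 k2 k3 (TV 0) (TV 1) (TV 2) (TV 3) :=
    { q_ne := hq, k0_ne := hk0, k1_ne := hk1, k2_ne := hk2, k3_ne := hk3
      sq0 := sq0, sq1 := sq1, sq2 := sq2, sq3 := sq3
      prod := fun x => by simpa using LinearMap.congr_fun hTV.2.2 x
      irr := fun W hW => hirr.2 W fun i w hw => by
        obtain ⟨a0, a1, a2, a3⟩ := hW w hw
        fin_cases i
        exacts [a0, a1, a2, a3] }
  -- Two kernels of dimension greater than half the dimension of `V` meet.
  obtain ⟨v, hv0, hv3, hv⟩ : ∃ v : V, TV 0 v = k0 • v ∧ TV 3 v = k3 • v ∧ v ≠ 0 := by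
    have e1 := Submodule.finrank_sup_add_finrank_inf_eq
      (LinearMap.ker (TV 0 - k0 • (1 : Module.End F V)))
      (LinearMap.ker (TV 3 - k3 • (1 : Module.End F V)))
    have e2 := Submodule.finrank_le (LinearMap.ker (TV 0 - k0 • (1 : Module.End F V)) ⊔
      LinearMap.ker (TV 3 - k3 • (1 : Module.End F V)))
    have e3 : LinearMap.ker (TV 0 - k0 • (1 : Module.End F V)) ⊓
        LinearMap.ker (TV 3 - k3 • (1 : Module.End F V)) ≠ ⊥ := by
      intro hb
      rw [hb, finrank_bot] at e1
      omega
    obtain ⟨v, hv, hv'⟩ := Submodule.exists_mem_ne_zero_of_ne_bot e3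
    rw [Submodule.mem_inf, LinearMap.mem_ker, LinearMap.mem_ker] at hv
    exact ⟨v, by simpa [sub_eq_zero] using hv.1, by simpa [sub_eq_zero] using hv.2, hv'⟩
  have hr := hQ.rel_chain hv0 hv3
  have hm0 : chain q k0 k1 (TV 0) (TV 1) v 0 ≠ 0 := by rwa [chain]
  set m := chain q k0 k1 (TV 0) (TV 1) v with hm
  clear_value m
  have hend := hQ.chain_end hroot hdim ker0 ker1 ker2 ker3 hr hm0
  have hprod := (hQ.prod_param hdim ker1 ker2 hr hm0).1
  have hli : LinearIndependent F (fun i : Fin (2 * p + 1) => m i) :=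
    linearIndependent_of_flag (fun j => flag m j) m _ (fun i j hij _ => mem_flag m hij)
      (fun j hj => hr.notMem_flag hQ.irr hm0 (by omega))
  let B : Module.Basis (Fin (2 * p + 1)) F V :=
    basisOfLinearIndependentOfCardEqFinrank hli (by simp [hdim])
  exact ⟨k0, k1, k2, k3, hk0, hk1, hk2, hk3, hprod,
    exists_isO hQ hprod hr hend B.equivFun.symm (fun j => by
      simp [B, Module.Basis.equivFun_symm_apply, Pi.single_apply])⟩

end DAHA
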